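/- For every finite simple graph G and every vertex v of G, Max(G) ≥ Max(G - v) and Min(G) ≥ Min(G - v), where G - v is the induced subgraph obtained by deleting the vertex v. -/

import Mathlib

/-!
Deleting a vertex never increases the value of the matching game. The two inequalities are proved
together by induction on the set `s` of remaining vertices (`gameValue_erase_le`).

If Max moves first on `s - v`, an optimal move there is also legal on `s`, and induction applies to
what remains. If Min moves first, take an optimal move `xy` of Min on `s`. When `v` is neither `x`
nor `y`, the same move is legal on `s - v`. When `v = x`, write `H = s - v`; the claim becomes
`Min(H) ≤ 1 + Max(H - y)`. If `y` has a neighbour `z` in `H`, Min plays `yz` and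
`Max(H - y - z) ≤ Max(H - y)` by induction. Otherwise `y` is isolated in `H`, so
`Min(H) = Min(H - y)`, and it remains to use `Min(K) ≤ 1 + Max(K)` for `K = H - y`: Min plays any
edge of `K`, and induction applied twice bounds the rest by `Max(K)`.

Both the removal of isolated vertices and the passage from the induced subgraph on a subtype to a
vertex set of the ambient graph are instances of one transfer principle
(`gameValue_congr_of_plays`): the value depends only on the set of legal moves, up to an injective
relabelling of the vertices.
-/

open Finset

variable {V : Type*} [DecidableEq V]

/-- The legal moves in the matching game on `G` when the set of remaining
(undeleted) vertices is `s`: ordered pairs of adjacent remaining vertices. -/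
def matchPlays (G : SimpleGraph V) [DecidableRel G.Adj] (s : Finset V) :
    Finset (V × V) :=
  (s ×ˢ s).filter fun p => G.Adj p.1 p.2

lemma matchPlays_card {G : SimpleGraph V} [DecidableRel G.Adj] {s : Finset V}
    {p : V × V} (hp : p ∈ matchPlays G s) :
    (s \ {p.1, p.2}).card < s.card := by
  simp only [matchPlays, mem_filter, mem_product] at hp
  refine card_lt_card (Finset.sdiff_ssubset ?_ ⟨p.1, mem_insert_self _ _⟩)
  intro x hx
  rcases mem_insert.mp hx with h | h
  · exact h ▸ hp.1.1
  · exact (mem_singleton.mp h) ▸ hp.1.2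

/-- The value of the matching game on the subgraph of `G` induced by the vertex
set `s`, with Max to move if `maxTurn = true` and Min to move otherwise:
the number of *further* edges added to the matching under optimal play. -/
def gameValue (G : SimpleGraph V) [DecidableRel G.Adj] (maxTurn : Bool)
    (s : Finset V) : ℕ :=
  if h : (matchPlays G s).Nonempty then
    if maxTurn then
      (matchPlays G s).attach.sup
        fun p => 1 + gameValue G false (s \ {p.1.1, p.1.2})
    else
      (matchPlays G s).attach.inf' (by simpa using h)
        fun p => 1 + gameValue G true (s \ {p.1.1, p.1.2})
  else 0
termination_by s.card
decreasing_by
  · exact matchPlays_card p.2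
  · exact matchPlays_card p.2

/-- The Max-start game matching number `Max(G)`. -/
noncomputable def gameMax [Fintype V] (G : SimpleGraph V) : ℕ :=
  letI : DecidableRel G.Adj := Classical.decRel _
  gameValue G true Finset.univ

/-- The Min-start game matching number `Min(G)`. -/
noncomputable def gameMin [Fintype V] (G : SimpleGraph V) : ℕ :=
  letI : DecidableRel G.Adj := Classical.decRel _
  gameValue G false Finset.univ

/-- `M` is a matching in `G`: a set of edges of `G` that are pairwise
vertex-disjoint. -/
def IsMatchingSet (G : SimpleGraph V) (M : Finset (Sym2 V)) : Prop :=
  (∀ e ∈ M, e ∈ G.edgeSet) ∧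
    ∀ e ∈ M, ∀ f ∈ M, e ≠ f → ∀ v : V, v ∈ e → v ∉ f

/-- The matching number `α'(G)`: the maximum size of a matching in `G`. -/
noncomputable def matchingNumber (G : SimpleGraph V) : ℕ :=
  sSup {n | ∃ M : Finset (Sym2 V), IsMatchingSet G M ∧ M.card = n}

lemma mem_matchPlays {G : SimpleGraph V} [DecidableRel G.Adj] {s : Finset V} {p : V × V} :
    p ∈ matchPlays G s ↔ (p.1 ∈ s ∧ p.2 ∈ s) ∧ G.Adj p.1 p.2 := by
  simp [matchPlays]

lemma gameValue_of_empty (G : SimpleGraph V) [DecidableRel G.Adj] (b : Bool) {s : Finset V}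
    (h : ¬ (matchPlays G s).Nonempty) : gameValue G b s = 0 := by
  rw [gameValue, dif_neg h]

lemma le_gameValue_true (G : SimpleGraph V) [DecidableRel G.Adj] {s : Finset V} {p : V × V}
    (hp : p ∈ matchPlays G s) :
    1 + gameValue G false (s \ {p.1, p.2}) ≤ gameValue G true s := by
  rw [gameValue.eq_def G true s, dif_pos ⟨p, hp⟩, if_pos rfl]
  exact Finset.le_sup (f := fun p : {x // x ∈ matchPlays G s} =>
    1 + gameValue G false (s \ {p.1.1, p.1.2})) (mem_attach _ ⟨p, hp⟩)

lemma gameValue_false_le (G : SimpleGraph V) [DecidableRel G.Adj] {s : Finset V} {p : V × V}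
    (hp : p ∈ matchPlays G s) :
    gameValue G false s ≤ 1 + gameValue G true (s \ {p.1, p.2}) := by
  rw [gameValue.eq_def G false s, dif_pos ⟨p, hp⟩, if_neg (by simp)]
  exact Finset.inf'_le (f := fun p : {x // x ∈ matchPlays G s} =>
    1 + gameValue G true (s \ {p.1.1, p.1.2})) (mem_attach _ ⟨p, hp⟩)

/-- The player to move has an optimal move whenever a move exists. -/
lemma exists_optimal (G : SimpleGraph V) [DecidableRel G.Adj] (b : Bool) {s : Finset V}
    (h : (matchPlays G s).Nonempty) :
    ∃ p ∈ matchPlays G s, gameValue G b s = 1 + gameValue G (!b) (s \ {p.1, p.2}) := by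
  have h' : (matchPlays G s).attach.Nonempty := by simpa using h
  cases b
  · rw [gameValue.eq_def G false s, dif_pos h, if_neg (by simp)]
    obtain ⟨p, -, hp⟩ := Finset.exists_mem_eq_inf' h'
      (fun p : {x // x ∈ matchPlays G s} => 1 + gameValue G true (s \ {p.1.1, p.1.2}))
    exact ⟨p.1, p.2, hp⟩
  · rw [gameValue.eq_def G true s, dif_pos h, if_pos rfl]
    obtain ⟨p, -, hp⟩ := Finset.exists_mem_eq_sup _ h'
      (fun p : {x // x ∈ matchPlays G s} => 1 + gameValue G false (s \ {p.1.1, p.1.2}))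
    exact ⟨p.1, p.2, hp⟩

/-- The value of the game depends only on the set of legal moves, up to an injective relabelling of
vertices. Vertices incident with no legal move play no role. -/
lemma gameValue_congr_of_plays {W : Type*} [DecidableEq W] (G : SimpleGraph V)
    [DecidableRel G.Adj] (G' : SimpleGraph W) [DecidableRel G'.Adj] (f : W → V)
    (hf : Function.Injective f) (s : Finset W) :
    ∀ (t : Finset V) (b : Bool), (matchPlays G t = (matchPlays G' s).image (Prod.map f f)) →
      gameValue G' b s = gameValue G b t := by
  induction s using Finset.strongInduction with
  | H s ih =>
    intro t b h
    have key : ∀ p ∈ matchPlays G' s, ∀ c : Bool,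
        gameValue G' c (s \ {p.1, p.2}) = gameValue G c (t \ {f p.1, f p.2}) := by
      intro p hp c
      have hss : s \ {p.1, p.2} ⊂ s := by
        refine Finset.ssubset_iff_subset_ne.2 ⟨sdiff_subset, fun he => ?_⟩
        have := matchPlays_card hp
        rw [he] at this
        exact lt_irrefl _ this
      refine ih _ hss _ _ ?_
      have hmem : ∀ q, q ∈ matchPlays G t ↔ q ∈ (matchPlays G' s).image (Prod.map f f) := by
        intro q
        rw [h]
      ext ⟨x, y⟩
      have hxy := hmem (x, y)
      simp only [mem_image, mem_matchPlays, mem_sdiff, mem_insert, mem_singleton, Prod.exists,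
        Prod.map_apply, Prod.mk.injEq] at hxy ⊢
      constructor
      · rintro ⟨⟨⟨hx, hx'⟩, hy, hy'⟩, ha⟩
        obtain ⟨a, b, ⟨⟨h1, h2⟩, h3⟩, rfl, rfl⟩ := hxy.1 ⟨⟨hx, hy⟩, ha⟩
        rw [hf.eq_iff, hf.eq_iff] at hx' hy'
        exact ⟨a, b, ⟨⟨⟨h1, hx'⟩, h2, hy'⟩, h3⟩, rfl, rfl⟩
      · rintro ⟨a, b, ⟨⟨⟨h1, hx'⟩, h2, hy'⟩, h3⟩, rfl, rfl⟩
        obtain ⟨⟨hx, hy⟩, ha⟩ := hxy.2 ⟨a, b, ⟨⟨h1, h2⟩, h3⟩, rfl, rfl⟩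
        rw [hf.eq_iff, hf.eq_iff, hf.eq_iff, hf.eq_iff]
        exact ⟨⟨⟨hx, hx'⟩, hy, hy'⟩, ha⟩
    have hfwd : ∀ p ∈ matchPlays G' s, Prod.map f f p ∈ matchPlays G t := by
      intro p hp
      rw [h]
      exact mem_image_of_mem _ hp
    by_cases hne : (matchPlays G' s).Nonempty
    · have hne' : (matchPlays G t).Nonempty := by
        rw [h]
        exact hne.image _
      obtain ⟨p, hp, hpv⟩ := exists_optimal G' b hne
      obtain ⟨q, hq, hqv⟩ := exists_optimal G b hne'
      rw [h, mem_image] at hq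
      obtain ⟨r, hr, rfl⟩ := hq
      rw [key p hp] at hpv
      simp only [Prod.map_fst, Prod.map_snd] at hqv
      rw [← key r hr] at hqv
      cases b
      · apply le_antisymm
        · rw [hqv]
          exact gameValue_false_le G' hr
        · rw [hpv]
          exact gameValue_false_le G (hfwd p hp)
      · apply le_antisymm
        · rw [hpv]
          exact le_gameValue_true G (hfwd p hp)
        · rw [hqv]
          exact le_gameValue_true G' hr
    · rw [gameValue_of_empty G' b hne, gameValue_of_empty]
      rw [h, image_nonempty]
      exact hne

lemma sdiff_pair_eq_erase (s : Finset V) (x y : V) :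
    s \ {x, y} = (s.erase x).erase y := by
  ext a
  simp only [mem_sdiff, mem_insert, mem_singleton, mem_erase]
  tauto

/-- Removing an isolated vertex does not change the value. -/
lemma gameValue_erase_isolated (G : SimpleGraph V) [DecidableRel G.Adj] (b : Bool) (s : Finset V)
    (y : V) (hy : ∀ z ∈ s, ¬ G.Adj y z) : gameValue G b s = gameValue G b (s.erase y) := by
  refine gameValue_congr_of_plays G G id Function.injective_id s (s.erase y) b ?_
  rw [Prod.map_id, image_id]
  ext ⟨a, c⟩
  simp only [mem_matchPlays, mem_erase]
  constructor
  · rintro ⟨⟨⟨-, ha⟩, -, hc⟩, hac⟩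
    exact ⟨⟨ha, hc⟩, hac⟩
  · rintro ⟨⟨ha, hc⟩, hac⟩
    refine ⟨⟨⟨?_, ha⟩, ?_, hc⟩, hac⟩
    · rintro rfl
      exact hy c hc hac
    · rintro rfl
      exact hy a ha hac.symm

/-- Monotonicity of both values under vertex deletion, for vertex sets of a fixed graph. The
induction is on the size of `s`; the two values must be treated together. -/
lemma gameValue_erase_le (G : SimpleGraph V) [DecidableRel G.Adj] (n : ℕ) :
    ∀ (s : Finset V), s.card ≤ n → ∀ (v : V) (b : Bool),
      gameValue G b (s.erase v) ≤ gameValue G b s := by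
  induction n with
  | zero =>
    intro s hs v b
    obtain rfl : s = ∅ := by simpa using hs
    simp
  | succ n ih =>
    intro s hs v b
    by_cases hv : v ∈ s
    swap
    · rw [erase_eq_of_notMem hv]
    have hcard : ∀ p ∈ matchPlays G s, (s \ {p.1, p.2}).card ≤ n := fun p hp => by
      have := matchPlays_card hp
      omega
    have hswap : ∀ x y : V, s.erase v \ {x, y} = (s \ {x, y}).erase v := fun x y => by
      rw [erase_sdiff_comm]
    have hlift : ∀ p ∈ matchPlays G (s.erase v), p ∈ matchPlays G s := fun p hp => by
      simp only [mem_matchPlays, mem_erase] at hp ⊢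
      tauto
    by_cases hne : (matchPlays G (s.erase v)).Nonempty
    swap
    · rw [gameValue_of_empty G b hne]
      exact Nat.zero_le _
    cases b
    · obtain ⟨p₀, hp₀⟩ := hne
      obtain ⟨⟨x, y⟩, hp, hpv⟩ := exists_optimal G false ⟨p₀, hlift p₀ hp₀⟩
      simp only [Bool.not_false] at hpv
      rw [hpv]
      have hH : (s.erase v).card ≤ n := by
        have := card_erase_lt_of_mem hv
        omega
      -- Settles the case where Min's optimal move on `s` uses `v`, with `w` the other endpoint.
      have key : ∀ w, gameValue G false (s.erase v) ≤
          1 + gameValue G true ((s.erase v).erase w) := by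
        intro w
        have hK : ((s.erase v).erase w).card ≤ n := (card_erase_le).trans hH
        by_cases hw : w ∈ s.erase v ∧ ∃ z ∈ s.erase v, G.Adj w z
        · obtain ⟨hw, z, hz, hwz⟩ := hw
          have h1 := gameValue_false_le G (p := (w, z)) (mem_matchPlays.2 ⟨⟨hw, hz⟩, hwz⟩)
          rw [sdiff_pair_eq_erase] at h1
          exact h1.trans (Nat.add_le_add_left (ih _ hK z true) 1)
        · have h0 : gameValue G false (s.erase v) =
              gameValue G false ((s.erase v).erase w) := by
            by_cases hm : w ∈ s.erase v
            · exact gameValue_erase_isolated G false _ w fun z hz hwz => hw ⟨hm, z, hz, hwz⟩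
            · rw [erase_eq_of_notMem hm]
          rw [h0]
          by_cases hk : (matchPlays G ((s.erase v).erase w)).Nonempty
          · obtain ⟨q, hq⟩ := hk
            have h1 := gameValue_false_le G hq
            rw [sdiff_pair_eq_erase] at h1
            have h2 := ih (((s.erase v).erase w).erase q.1) (card_erase_le.trans hK) q.2 true
            have h3 := ih _ hK q.1 true
            omega
          · rw [gameValue_of_empty G false hk]
            exact Nat.zero_le _
      by_cases hx : x = v
      · rw [sdiff_pair_eq_erase, hx]
        exact key y
      by_cases hy : y = v
      · rw [sdiff_pair_eq_erase, erase_right_comm, hy]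
        exact key x
      have hp' : (x, y) ∈ matchPlays G (s.erase v) := by
        simp only [mem_matchPlays, mem_erase] at hp ⊢
        tauto
      have h1 := gameValue_false_le G hp'
      rw [hswap] at h1
      exact h1.trans (Nat.add_le_add_left (ih _ (hcard _ hp) v true) 1)
    · obtain ⟨p, hp, hpv⟩ := exists_optimal G true hne
      rw [hpv, hswap]
      exact (Nat.add_le_add_left (ih _ (hcard p (hlift p hp)) v _) 1).trans
        (le_gameValue_true G (hlift p hp))

/-- The game on the induced subgraph `G - v` is the game of `G` on the vertex set without `v`. -/
lemma gameValue_induce [Fintype V] (G : SimpleGraph V) [DecidableRel G.Adj] (v : V)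
    [Fintype ({u | u ≠ v} : Set V)] [DecidableEq ({u | u ≠ v} : Set V)]
    [DecidableRel (G.induce {u | u ≠ v}).Adj] (b : Bool) :
    gameValue (G.induce {u | u ≠ v}) b univ = gameValue G b (univ.erase v) := by
  refine gameValue_congr_of_plays G _ Subtype.val Subtype.val_injective _ _ b ?_
  ext ⟨x, y⟩
  simp only [mem_image, mem_matchPlays, mem_erase, mem_univ, Prod.exists, Prod.map_apply,
    Prod.mk.injEq, SimpleGraph.comap_adj, and_true, true_and]
  constructor
  · rintro ⟨⟨hx, hy⟩, h⟩
    exact ⟨⟨x, hx⟩, ⟨y, hy⟩, h, rfl, rfl⟩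
  · rintro ⟨⟨a, ha⟩, ⟨c, hc⟩, h, rfl, rfl⟩
    exact ⟨⟨ha, hc⟩, h⟩

/-- deleting a vertex cannot increase `Max` or `Min`. -/
theorem stmt2 {V : Type*} [Fintype V] [DecidableEq V] (G : SimpleGraph V) (v : V) :
    gameMax (G.induce {u | u ≠ v}) ≤ gameMax G ∧
    gameMin (G.induce {u | u ≠ v}) ≤ gameMin G := by
  classical
  unfold gameMax gameMin
  constructor
  · rw [gameValue_induce]
    exact gameValue_erase_le G _ univ le_rfl v true
  · rw [gameValue_induce]
    exact gameValue_erase_le G _ univ le_rfl v false
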